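/- Let m ≥ 1, κ, Γ > 0, α ∈ (0,1), μ > 0, t₁ ≥ 0. Let N : ℝ → ℝ^{n×m} and M : ℝ → ℝ^{m×m} be continuous with M(t) symmetric positive semidefinite for all t ≥ 0 and M(t) ⪰ μ·I_m for all t ≥ t₁. Let θ : ℝ → ℝ^m be differentiable and satisfy θ'(t) = −κ·N(t)ᵀ(⌈N(t)θ(t)⌋^{1−α} + ⌈N(t)θ(t)⌋^{1+α}) − Γ·M(t)ᵀ(⌈M(t)θ(t)⌋^{1−α} + ⌈M(t)θ(t)⌋^{1+α}). Then θ(t) = 0 for all t ≥ t₁ + (2/α)·(1/κ₁ + 1/κ₂), where κ₁ = 2^{(2−α)/2}·Γ·μ^{2−α} and κ₂ = 2^{(2+α)/2}·m^{−α/2}·Γ·μ^{2+α}; in particular this settling-time bound is independent of the value θ(t₁) (fixed-time convergence). -/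

import Mathlib

open scoped Matrix
open Finset

/-- The componentwise signed power `⌈v⌋^β`, with `i`-th component `|v_i|^β · sgn(v_i)`. -/
noncomputable def signedPow {d : ℕ} (β : ℝ) (v : Fin d → ℝ) : Fin d → ℝ :=
  fun i => |v i| ^ β * Real.sign (v i)

lemma scalar_fxt (V V' : ℝ → ℝ) (γ k1 k2 t₁ T : ℝ) (hγ : 0 < γ) (hk1 : 0 < k1) (hk2 : 0 < k2)
    (hV : ∀ t, HasDerivAt V (V' t) t) (hV0 : ∀ t, 0 ≤ V t)
    (hd : ∀ t, t₁ ≤ t → V' t ≤ -(k1 * V t ^ (1 - γ)) - k2 * V t ^ (1 + γ))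
    (hT : t₁ + (1 / γ) * (1 / k1 + 1 / k2) ≤ T) : V T = 0 := by
  by_contra hne
  have hVT : 0 < V T := lt_of_le_of_ne (hV0 T) (Ne.symm hne)
  have hApos : 0 < (1 / γ) * (1 / k1 + 1 / k2) := by positivity
  have hanti : AntitoneOn V (Set.Ici t₁) := by
    apply antitoneOn_of_deriv_nonpos (convex_Ici _)
      (fun t _ => (hV t).continuousAt.continuousWithinAt)
      (fun t _ => (hV t).differentiableAt.differentiableWithinAt)
    intro t ht
    rw [interior_Ici] at ht
    rw [(hV t).deriv]
    have h1 := Real.rpow_nonneg (hV0 t) (1 - γ)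
    have h2 := Real.rpow_nonneg (hV0 t) (1 + γ)
    have := hd t (le_of_lt ht)
    nlinarith [mul_nonneg hk1.le h1, mul_nonneg hk2.le h2]
  have htT : t₁ ≤ T := by linarith
  have hpos : ∀ t ∈ Set.Icc t₁ T, 0 < V t := fun t ht =>
    lt_of_lt_of_le hVT (hanti (Set.mem_Ici.2 ht.1) (Set.mem_Ici.2 htT) ht.2)
  set A := (1 / γ) * (1 / k1 + 1 / k2) with hA
  have hg : ∀ t ∈ Set.Icc t₁ T, HasDerivAt (fun s => (1 + V s ^ γ)⁻¹ - s / A)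
      (-(V' t * γ * V t ^ (γ - 1)) / (1 + V t ^ γ) ^ 2 - 1 / A) t := by
    intro t ht
    have hp := hpos t ht
    have h1 := ((hV t).rpow_const (p := γ) (Or.inl hp.ne')).const_add 1
    have h2 := h1.inv (by positivity)
    exact h2.sub ((hasDerivAt_id t).div_const A)
  have hmono : MonotoneOn (fun s => (1 + V s ^ γ)⁻¹ - s / A) (Set.Icc t₁ T) := by
    apply monotoneOn_of_deriv_nonneg (convex_Icc _ _)
      (fun t ht => (hg t ht).continuousAt.continuousWithinAt)
      (fun t ht => (hg t (interior_subset ht)).differentiableAt.differentiableWithinAt)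
    intro t ht
    have ht := interior_subset ht
    rw [(hg t ht).deriv]
    have hp := hpos t ht
    have hdt := hd t ht.1
    have hu : 0 < V t ^ γ := by positivity
    have e1 : V t ^ (1 - γ) * V t ^ (γ - 1) = 1 := by
      rw [← Real.rpow_add hp]; simp
    have e2 : V t ^ (1 + γ) * V t ^ (γ - 1) = V t ^ γ * V t ^ γ := by
      rw [← Real.rpow_add hp, ← Real.rpow_add hp]; congr 1; ring
    set u := V t ^ γ
    have hw : 0 < V t ^ (γ - 1) := by positivity
    have h3 : V' t * V t ^ (γ - 1) ≤ -k1 - k2 * (u * u) := by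
      have := mul_le_mul_of_nonneg_right hdt hw.le
      calc _ ≤ _ := this
        _ = -(k1 * (V t ^ (1 - γ) * V t ^ (γ - 1))) - k2 * (V t ^ (1 + γ) * V t ^ (γ - 1)) := by ring
        _ = _ := by rw [e1, e2]; ring
    have h4 : γ * (k1 + k2 * (u * u)) ≤ -(V' t * γ * V t ^ (γ - 1)) := by nlinarith
    have h5 : 1 / A ≤ γ * (k1 + k2 * (u * u)) / (1 + u) ^ 2 := by
      have hA' : A = (k1 + k2) / (γ * k1 * k2) := by rw [hA]; field_simp; ring
      rw [hA', one_div_div, div_le_div_iff₀ (by positivity) (by positivity)]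
      have : 0 ≤ γ * (k1 - k2 * u) ^ 2 := by positivity
      nlinarith
    have h6 : γ * (k1 + k2 * (u * u)) / (1 + u) ^ 2
      ≤ -(V' t * γ * V t ^ (γ - 1)) / (1 + u) ^ 2 := by gcongr
    linarith
  have hfin := hmono (Set.left_mem_Icc.2 htT) (Set.right_mem_Icc.2 htT) htT
  simp only at hfin
  have g1 : 0 < (1 + V t₁ ^ γ)⁻¹ := by have := hpos t₁ (Set.left_mem_Icc.2 htT); positivity
  have g2 : (1 + V T ^ γ)⁻¹ < 1 := by
    apply inv_lt_one_of_one_lt₀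
    have : 0 < V T ^ γ := by positivity
    linarith
  have g3 : 1 ≤ (T - t₁) / A := by rw [le_div_iff₀ hApos]; linarith
  rw [sub_div] at g3
  linarith

lemma dot_signedPow {d : ℕ} (β : ℝ) (hβ : 0 < 1 + β) (v : Fin d → ℝ) :
    v ⬝ᵥ signedPow β v = ∑ i, (v i ^ 2) ^ ((1 + β) / 2) := by
  unfold dotProduct signedPow
  refine Finset.sum_congr rfl fun i _ => ?_
  have h1 : (v i ^ 2) ^ ((1 + β) / 2) = |v i| ^ (1 + β) := by
    rw [← sq_abs, ← Real.rpow_natCast, ← Real.rpow_mul (abs_nonneg _)]; congr 1; push_cast; ring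
  rw [h1]
  by_cases h : v i = 0
  · rw [h]; simp [Real.zero_rpow hβ.ne']
  · rw [Real.rpow_add (abs_pos.2 h), Real.rpow_one]
    have : v i * Real.sign (v i) = |v i| := by
      rcases lt_or_gt_of_ne h with h | h
      · rw [Real.sign_of_neg h, abs_of_neg h]; ring
      · rw [Real.sign_of_pos h, abs_of_pos h]; ring
    rw [← this]; ring

lemma sum_low {d : ℕ} (q : ℝ) (hq : 0 < q) (hq1 : q ≤ 1) (a : Fin d → ℝ) (ha : ∀ i, 0 ≤ a i) :
    (∑ i, a i) ^ q ≤ ∑ i, a i ^ q := by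
  have : ∀ s : Finset (Fin d), (∑ i ∈ s, a i) ^ q ≤ ∑ i ∈ s, a i ^ q := by
    intro s
    induction s using Finset.induction_on with
    | empty => simp [Real.zero_rpow hq.ne']
    | insert i s hi ih =>
      rw [Finset.sum_insert hi, Finset.sum_insert hi]
      refine (Real.rpow_add_le_add_rpow (ha i) (Finset.sum_nonneg fun j _ => ha j) hq.le hq1).trans ?_
      linarith
  exact this _

lemma sum_high {d : ℕ} (hd : 1 ≤ d) (γ : ℝ) (hγ : 0 < γ) (a : Fin d → ℝ) (ha : ∀ i, 0 ≤ a i) :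
    (d : ℝ) ^ (-γ) * (∑ i, a i) ^ (1 + γ) ≤ ∑ i, a i ^ (1 + γ) := by
  have h := Real.rpow_sum_le_const_mul_sum_rpow (Finset.univ : Finset (Fin d)) a
    (p := 1 + γ) (by linarith)
  simp only [abs_of_nonneg (ha _), Finset.card_univ, Fintype.card_fin, add_sub_cancel_left] at h
  have hd0 : (0:ℝ) < d := by exact_mod_cast hd
  rw [Real.rpow_neg hd0.le, inv_mul_le_iff₀ (by positivity)]
  exact h

lemma lower {m : ℕ} (μ : ℝ) (hμ : 0 < μ) (M : Matrix (Fin m) (Fin m) ℝ)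
    (h : (M - μ • (1 : Matrix (Fin m) (Fin m) ℝ)).PosSemidef) (x : Fin m → ℝ) :
    μ ^ 2 * ∑ i, x i ^ 2 ≤ ∑ i, (M *ᵥ x) i ^ 2 := by
  have h1 := h.dotProduct_mulVec_nonneg x
  rw [Matrix.sub_mulVec, dotProduct_sub, Matrix.smul_mulVec, Matrix.one_mulVec] at h1
  simp only [star_trivial, dotProduct_smul, smul_eq_mul] at h1
  have h2 := Finset.sum_nonneg (fun i (_ : i ∈ (Finset.univ : Finset (Fin m))) =>
    sq_nonneg ((M *ᵥ x) i - μ * x i))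
  have h3 : ∑ i, ((M *ᵥ x) i - μ * x i) ^ 2 = ∑ i, (M *ᵥ x) i ^ 2 - 2 * μ * (x ⬝ᵥ M *ᵥ x)
      + μ ^ 2 * (x ⬝ᵥ x) := by
    unfold dotProduct
    rw [Finset.mul_sum, Finset.mul_sum, ← Finset.sum_sub_distrib, ← Finset.sum_add_distrib]
    exact Finset.sum_congr rfl fun i _ => by ring
  have h4 : ∑ i, x i ^ 2 = x ⬝ᵥ x := by
    unfold dotProduct; exact Finset.sum_congr rfl fun i _ => by ring
  rw [h4]
  nlinarith

/-- **Disturbance-free fixed-time parameter convergence.**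
Under the fixed-time update law with `M(t) ⪰ μI` for `t ≥ t₁`, the estimation error
satisfies `θ(t) = 0` for all `t ≥ t₁ + (2/α)(1/κ₁ + 1/κ₂)`, where
`κ₁ = 2^{(2−α)/2} Γ μ^{2−α}` and `κ₂ = 2^{(2+α)/2} m^{−α/2} Γ μ^{2+α}`;
the settling-time bound is independent of `θ(t₁)`. -/
theorem fxt_parameter_convergence (n m : ℕ) (hm : 1 ≤ m) (κ Γ α μ t₁ : ℝ)
    (hκ : 0 < κ) (hΓ : 0 < Γ) (hα : α ∈ Set.Ioo (0:ℝ) 1) (hμ : 0 < μ) (ht₁ : 0 ≤ t₁)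
    (N : ℝ → Matrix (Fin n) (Fin m) ℝ) (M : ℝ → Matrix (Fin m) (Fin m) ℝ)
    (hNc : Continuous N) (hMc : Continuous M)
    (hMpsd : ∀ t : ℝ, 0 ≤ t → (M t).PosSemidef)
    (hMμ : ∀ t : ℝ, t₁ ≤ t → (M t - μ • (1 : Matrix (Fin m) (Fin m) ℝ)).PosSemidef)
    (θ θ' : ℝ → Fin m → ℝ)
    (hθ : ∀ t, HasDerivAt θ (θ' t) t)
    (hode : ∀ t : ℝ, θ' t =
        (-κ) • ((N t)ᵀ *ᵥ (signedPow (1 - α) (N t *ᵥ θ t) + signedPow (1 + α) (N t *ᵥ θ t)))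
        - Γ • ((M t)ᵀ *ᵥ (signedPow (1 - α) (M t *ᵥ θ t) + signedPow (1 + α) (M t *ᵥ θ t)))) :
    ∀ t : ℝ,
      t₁ + (2 / α) * (1 / ((2:ℝ) ^ ((2 - α) / 2) * Γ * μ ^ (2 - α))
          + 1 / ((2:ℝ) ^ ((2 + α) / 2) * (m : ℝ) ^ (-α / 2) * Γ * μ ^ (2 + α))) ≤ t →
      θ t = 0 := by
  have hα0 : 0 < α := hα.1
  have hα1 : α < 1 := hα.2
  have hm0 : (0:ℝ) < m := by exact_mod_cast hm
  intro T hT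
  have hVd : ∀ t, HasDerivAt (fun s => (1 / 2 : ℝ) * ∑ i, θ s i ^ 2) (θ t ⬝ᵥ θ' t) t := by
    intro t
    have h := (HasDerivAt.fun_sum (u := Finset.univ) fun i _ =>
      ((hasDerivAt_pi.1 (hθ t)) i).pow 2).const_mul (1 / 2 : ℝ)
    refine h.congr_deriv ?_
    unfold dotProduct
    rw [Finset.mul_sum]
    refine Finset.sum_congr rfl fun i _ => ?_
    push_cast
    ring
  have hV0 : ∀ t, 0 ≤ (1 / 2 : ℝ) * ∑ i, θ t i ^ 2 := fun t =>
    mul_nonneg (by norm_num) (Finset.sum_nonneg fun i _ => sq_nonneg _)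
  have key := scalar_fxt (fun s => (1 / 2 : ℝ) * ∑ i, θ s i ^ 2) (fun t => θ t ⬝ᵥ θ' t) (α / 2)
    ((2:ℝ) ^ ((2 - α) / 2) * Γ * μ ^ (2 - α))
    ((2:ℝ) ^ ((2 + α) / 2) * (m : ℝ) ^ (-α / 2) * Γ * μ ^ (2 + α)) t₁ T
    (by positivity) (by positivity) (by positivity) hVd hV0 ?_ (by rwa [one_div_div])
  · have h0 : ∑ i, θ T i ^ 2 = 0 := by simpa using key
    rw [Finset.sum_eq_zero_iff_of_nonneg fun i _ => sq_nonneg _] at h0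
    funext i
    simpa using h0 i (Finset.mem_univ i)
  · intro t ht
    have hdot : ∀ {k : ℕ} (A : Matrix (Fin k) (Fin m) ℝ),
        θ t ⬝ᵥ (Aᵀ *ᵥ (signedPow (1 - α) (A *ᵥ θ t) + signedPow (1 + α) (A *ᵥ θ t)))
        = ∑ i, ((A *ᵥ θ t) i ^ 2) ^ (1 - α / 2) + ∑ i, ((A *ᵥ θ t) i ^ 2) ^ (1 + α / 2) := by
      intro k A
      rw [Matrix.dotProduct_mulVec, Matrix.vecMul_transpose, dotProduct_add,
        dot_signedPow _ (by linarith), dot_signedPow _ (by linarith)]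
      congr 3
      · funext i; congr 1; ring
      · funext i; congr 1; ring
    have hlow := lower μ hμ (M t) (hMμ t ht) (θ t)
    have hs1 := sum_low (1 - α / 2) (by linarith) (by linarith) (fun i => (M t *ᵥ θ t) i ^ 2)
      (fun i => sq_nonneg _)
    have hs2 := sum_high hm (α / 2) (by linarith) (fun i => (M t *ᵥ θ t) i ^ 2)
      (fun i => sq_nonneg _)
    have hN : 0 ≤ ∑ i, ((N t *ᵥ θ t) i ^ 2) ^ (1 - α / 2)
        + ∑ i, ((N t *ᵥ θ t) i ^ 2) ^ (1 + α / 2) :=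
      add_nonneg (Finset.sum_nonneg fun i _ => Real.rpow_nonneg (sq_nonneg _) _)
        (Finset.sum_nonneg fun i _ => Real.rpow_nonneg (sq_nonneg _) _)
    have hVt := hV0 t
    have hpow : ∀ q : ℝ, 0 ≤ q → (2:ℝ) ^ q * μ ^ (2 * q) * ((1 / 2 : ℝ) * ∑ i, θ t i ^ 2) ^ q
        ≤ (∑ i, (M t *ᵥ θ t) i ^ 2) ^ q := by
      intro q hq
      have e : μ ^ (2 * q) = (μ ^ 2) ^ q := by
        rw [Real.rpow_mul hμ.le]; norm_num
      rw [e, ← Real.mul_rpow (by norm_num) (by positivity), ← Real.mul_rpow (by positivity) hVt]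
      apply Real.rpow_le_rpow (by positivity) _ hq
      linarith
    have p1 := hpow (1 - α / 2) (by linarith)
    have p2 := hpow (1 + α / 2) (by linarith)
    have q1 := mul_le_mul_of_nonneg_left (p1.trans hs1) hΓ.le
    have q2 := mul_le_mul_of_nonneg_left
      ((mul_le_mul_of_nonneg_left p2 (Real.rpow_nonneg hm0.le (-(α / 2)))).trans hs2) hΓ.le
    have e1 : (2 - α) / 2 = 1 - α / 2 := by ring
    have e2 : (2 + α) / 2 = 1 + α / 2 := by ring
    have e3 : -α / 2 = -(α / 2) := by ring
    have e4 : 2 - α = 2 * (1 - α / 2) := by ring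
    have e5 : 2 + α = 2 * (1 + α / 2) := by ring
    have hκN := mul_nonneg hκ.le hN
    rw [hode t, dotProduct_sub, dotProduct_smul, dotProduct_smul, hdot, hdot, e1, e2, e3, e4, e5]
    simp only [smul_eq_mul]
    linarith
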